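/- Let A be a linear hyperplane arrangement in ℝ^d, ξ a random vector with a rotationally invariant distribution on ℝ^d assigning zero probability to every proper linear subspace. Then for each k ∈ {0,…,d}, Σ_{C ∈ R(A)} ν_k(C) = a_k, where ν_k(C) = P[dim(ξ, C) = k] is the k-th conic intrinsic volume of the chamber C and a_k is the absolute value of the k-th coefficient of χ_A. (Klivans–Swartz formula.) -/

import Mathlib

open scoped RealInnerProductSpace Pointwise Classical
open Set

noncomputable section

abbrev E (d : ℕ) : Type := EuclideanSpace ℝ (Fin d)

variable {d : ℕ}

/-- Positive hull: all finite nonnegative combinations of elements of `A`. -/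
def posHull (A : Set (E d)) : Set (E d) :=
  {x | ∃ (n : ℕ) (c : Fin n → ℝ) (v : Fin n → E d),
    (∀ i, 0 ≤ c i) ∧ (∀ i, v i ∈ A) ∧ x = ∑ i, c i • v i}

/-- Dual (polar) cone. -/
def polarCone (C : Set (E d)) : Set (E d) := {z | ∀ y ∈ C, ⟪z, y⟫ ≤ 0}

/-- A polyhedral cone: finite intersection of linear closed half-spaces. -/
def IsPolyCone (C : Set (E d)) : Prop :=
  ∃ (m : ℕ) (y : Fin m → E d), C = {z | ∀ i, ⟪z, y i⟫ ≤ 0}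

/-- A polyhedral set: finite intersection of closed half-spaces. -/
def IsPolyhedron (P : Set (E d)) : Prop :=
  ∃ (m : ℕ) (y : Fin m → E d) (c : Fin m → ℝ), P = {z | ∀ i, ⟪z, y i⟫ ≤ c i}

/-- Faces of `P`: `P` itself, or intersections with supporting hyperplanes. -/
def IsFaceOf (P F : Set (E d)) : Prop :=
  F = P ∨ ∃ (y : E d) (c : ℝ), (∀ z ∈ P, ⟪y, z⟫ ≤ c) ∧ F = {z | z ∈ P ∧ ⟪y, z⟫ = c}

/-- Dimension of a set: dimension of its affine hull. -/
def sdim (F : Set (E d)) : ℕ := Module.finrank ℝ (affineSpan ℝ F).direction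

/-- The `k`-dimensional (nonempty) faces of `P`. -/
def facesOfDim (P : Set (E d)) (k : ℕ) : Set (Set (E d)) :=
  {F | IsFaceOf P F ∧ F.Nonempty ∧ sdim F = k}

/-- Tangent cone of `P` at a point `f₀`. -/
def tangentConeOf (P : Set (E d)) (f₀ : E d) : Set (E d) :=
  {u | ∃ δ : ℝ, 0 < δ ∧ f₀ + δ • u ∈ P}

/-- Normal cone of `P` at its face `F`: polar of the tangent cone at any
relative interior point of `F`. -/
def normalCone (P F : Set (E d)) : Set (E d) :=
  {z | ∀ f₀ ∈ intrinsicInterior ℝ F, ∀ u ∈ tangentConeOf P f₀, ⟪z, u⟫ ≤ 0}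

/-- `y` is a nearest point of `P` to `x`. -/
def IsNearestPt (P : Set (E d)) (x y : E d) : Prop :=
  y ∈ P ∧ ∀ z ∈ P, dist x y ≤ dist x z

/-- `dim(x,P) = k`: the metric projection of `x` onto `P` lies in the relative
interior of a `k`-dimensional face of `P`. -/
def projDimEq (P : Set (E d)) (x : E d) (k : ℕ) : Prop :=
  ∃ y F, IsNearestPt P x y ∧ IsFaceOf P F ∧ y ∈ intrinsicInterior ℝ F ∧ sdim F = k

def IsHyperplane (H : Set (E d)) : Prop :=
  ∃ (y : E d) (c : ℝ), y ≠ 0 ∧ H = {z | ⟪y, z⟫ = c}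

def IsLinearHyperplane (H : Set (E d)) : Prop :=
  ∃ y : E d, y ≠ 0 ∧ H = {z | ⟪y, z⟫ = 0}

/-- Closed chambers of the complement of the set `S`. -/
def IsChamberOfUnion (S P : Set (E d)) : Prop :=
  ∃ x : E d, x ∉ S ∧ P = closure (connectedComponentIn Sᶜ x)

/-- Closed chambers of the hyperplane arrangement `A`. -/
def IsChamber (A : Finset (Set (E d))) (P : Set (E d)) : Prop :=
  IsChamberOfUnion (⋃ H ∈ A, H) P

/-- Intersection of a finite subcollection of hyperplanes (`⊤` for `∅`). -/
def interSet (B : Finset (Set (E d))) : Set (E d) := ⋂ H ∈ B, H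

/-- The unsigned coefficient `a_k` of the characteristic polynomial:
`χ_A(t) = Σ_k (-1)^(d-k) a_k t^k` via Whitney's formula. -/
def charCoeff (A : Finset (Set (E d))) (k : ℕ) : ℤ :=
  (-1 : ℤ) ^ (d - k) *
    ∑ B ∈ A.powerset,
      if (interSet B).Nonempty ∧ sdim (interSet B) = k then (-1 : ℤ) ^ B.card else 0

/-!
Call `x` generic if its projection to each flat of the arrangement avoids all hyperplanes not
containing that flat. For generic `x` the number of chambers `C` with `dim(x, C) = k` is exactly
`a_k`; since `ξ` is almost surely generic, integrating over `ξ` gives the formula.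

The pointwise count is proved by deletion and restriction. Let a new hyperplane `H` cut a chamber
`C`. By genericity, the nearest point of `C` to `x` lies strictly on one side of `H`, or its
smallest flat is contained in `H`. In the first case the half of `C` on that side keeps the nearest
point, and the nearest point of the other half is that of `C ∩ H`; in the second case `C`, both
halves and `C ∩ H` share their nearest point. Hence inserting `H` adds to the count on the ambient
space the count for the arrangement induced on `H`, and Whitney's alternating sum for `a_k`
satisfies the same recursion.
-/

section Cones

variable {ι F : Type*} [NormedAddCommGroup F] [InnerProductSpace ℝ F]

lemma span_singleton_neg (b : F) : (ℝ ∙ -b) = ℝ ∙ b := by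
  rw [← Set.neg_singleton, Submodule.span_neg]

/-- The flat of the arrangement with normal vectors `h` cut out by the hyperplanes indexed by `B`;
the empty flat is the whole space. -/
def flat (h : ι → F) (B : Finset ι) : Submodule ℝ F :=
  ⨅ i ∈ B, (ℝ ∙ h i)ᗮ

lemma mem_flat {h : ι → F} {B : Finset ι} {z : F} : z ∈ flat h B ↔ ∀ i ∈ B, ⟪h i, z⟫ = 0 := by
  simp only [flat, Submodule.mem_iInf, Submodule.mem_orthogonal_singleton_iff_inner_right]

lemma flat_insert (h : ι → F) (a : ι) (B : Finset ι) :
    flat h (insert a B) = (ℝ ∙ h a)ᗮ ⊓ flat h B :=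
  Finset.iInf_insert ..

lemma flat_congr {h h' : ι → F} {B : Finset ι} (hspan : ∀ i ∈ B, (ℝ ∙ h' i) = ℝ ∙ h i) :
    flat h' B = flat h B :=
  biInf_congr fun i hi => by rw [hspan i hi]

/-- The indices of the hyperplanes of the arrangement `(h i)ᗮ`, `i ∈ A`, that pass through `y`. -/
def zeroSet (h : ι → F) (A : Finset ι) (y : F) : Finset ι :=
  {i ∈ A | ⟪h i, y⟫ = 0}

lemma mem_zeroSet {h : ι → F} {A : Finset ι} {y : F} {i : ι} :
    i ∈ zeroSet h A y ↔ i ∈ A ∧ ⟪h i, y⟫ = 0 :=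
  Finset.mem_filter

lemma zeroSet_subset (h : ι → F) (A : Finset ι) (y : F) : zeroSet h A y ⊆ A :=
  Finset.filter_subset ..

/-- The smallest flat of the arrangement `(h i)ᗮ`, `i ∈ A`, that contains `y`. -/
def minFlat (h : ι → F) (A : Finset ι) (y : F) : Submodule ℝ F :=
  flat h (zeroSet h A y)

lemma mem_minFlat {h : ι → F} {A : Finset ι} {y z : F} :
    z ∈ minFlat h A y ↔ ∀ i ∈ A, ⟪h i, y⟫ = 0 → ⟪h i, z⟫ = 0 := by
  simp only [minFlat, mem_flat, mem_zeroSet, and_imp]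

lemma self_mem_minFlat (h : ι → F) (A : Finset ι) (y : F) : y ∈ minFlat h A y :=
  mem_minFlat.2 fun _ _ => id

lemma minFlat_congr {h h' : ι → F} {A : Finset ι} (hspan : ∀ i ∈ A, (ℝ ∙ h' i) = ℝ ∙ h i) :
    minFlat h' A = minFlat h A := by
  have inner_eq_zero_iff : ∀ i ∈ A, ∀ z, ⟪h' i, z⟫ = 0 ↔ ⟪h i, z⟫ = 0 := fun i hi z => by
    simp only [← Submodule.mem_orthogonal_singleton_iff_inner_right, hspan i hi]
  ext y z
  simp only [mem_minFlat]
  exact forall₂_congr fun i hi => imp_congr (inner_eq_zero_iff i hi y) (inner_eq_zero_iff i hi z)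

lemma minFlat_insert_of_inner_eq_zero {h : ι → F} {a : ι} {y : F} (hy : ⟪h a, y⟫ = 0)
    (A : Finset ι) : minFlat h (insert a A) y = (ℝ ∙ h a)ᗮ ⊓ minFlat h A y := by
  ext z
  simp [mem_minFlat, hy, Submodule.mem_orthogonal_singleton_iff_inner_right]

lemma minFlat_insert_of_inner_ne_zero {h : ι → F} {a : ι} {y : F} (hy : ⟪h a, y⟫ ≠ 0)
    (A : Finset ι) : minFlat h (insert a A) y = minFlat h A y := by
  ext z
  simp [mem_minFlat, hy]

lemma exists_mem_inner_pos {V : Submodule ℝ F} {b : F} (hV : ¬V ≤ (ℝ ∙ b)ᗮ) :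
    ∃ v ∈ V, 0 < ⟪b, v⟫ := by
  obtain ⟨v, hvV, hv⟩ := SetLike.not_le_iff_exists.1 hV
  rw [Submodule.mem_orthogonal_singleton_iff_inner_right] at hv
  rcases lt_or_gt_of_ne hv with hneg | hpos
  · exact ⟨-v, V.neg_mem hvV, by simpa using hneg⟩
  · exact ⟨v, hvV, hpos⟩

lemma finrank_inf_orthogonal_singleton_add_one {V : Submodule ℝ F} [FiniteDimensional ℝ V] {b : F}
    (hV : ¬V ≤ (ℝ ∙ b)ᗮ) : Module.finrank ℝ ↥(V ⊓ (ℝ ∙ b)ᗮ) + 1 = Module.finrank ℝ V := by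
  have inner_proj : ∀ v ∈ V, ⟪V.starProjection b, v⟫ = ⟪b, v⟫ := fun v hv => by
    rw [← sub_eq_zero, ← inner_sub_left, ← neg_sub, inner_neg_left,
      Submodule.starProjection_inner_eq_zero _ _ hv, neg_zero]
  have proj_ne_zero : V.starProjection b ≠ 0 := fun h0 => hV fun v hv => by
    rw [Submodule.mem_orthogonal_singleton_iff_inner_right, ← inner_proj v hv, h0, inner_zero_left]
  have inf_eq : V ⊓ (ℝ ∙ b)ᗮ = (ℝ ∙ V.starProjection b)ᗮ ⊓ V := by
    ext v
    simp only [Submodule.mem_inf, Submodule.mem_orthogonal_singleton_iff_inner_right]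
    constructor
    · exact fun ⟨hv, h0⟩ => ⟨(inner_proj v hv).trans h0, hv⟩
    · exact fun ⟨h0, hv⟩ => ⟨hv, (inner_proj v hv).symm.trans h0⟩
  have span_le : (ℝ ∙ V.starProjection b) ≤ V :=
    (Submodule.span_singleton_le_iff_mem _ _).2 (V.starProjection_apply_mem b)
  rw [inf_eq, add_comm, ← finrank_span_singleton (K := ℝ) proj_ne_zero,
    Submodule.finrank_add_inf_finrank_orthogonal span_le]

lemma exists_mem_segment_inner_eq_zero {b u v : F} (hu : ⟪b, u⟫ ≤ 0) (hv : 0 ≤ ⟪b, v⟫) :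
    ∃ w ∈ segment ℝ u v, ⟪b, w⟫ = 0 :=
  (convex_segment u v).isPreconnected.intermediate_value (left_mem_segment ℝ u v)
    (right_mem_segment ℝ u v) (f := fun z => ⟪b, z⟫) (by fun_prop) ⟨hu, hv⟩

/-- The open polyhedral cone with inner normals `g i`, `i ∈ A`. -/
def openCone (g : ι → F) (A : Finset ι) : Set F :=
  {z | ∀ i ∈ A, 0 < ⟪g i, z⟫}

/-- The closed polyhedral cone with inner normals `g i`, `i ∈ A`. -/
def closedCone (g : ι → F) (A : Finset ι) : Set F :=
  {z | ∀ i ∈ A, 0 ≤ ⟪g i, z⟫}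

lemma openCone_insert (g : ι → F) (a : ι) (A : Finset ι) :
    openCone g (insert a A) = openCone g A ∩ {z | 0 < ⟪g a, z⟫} := by
  ext z
  simp [openCone, and_comm]

lemma closedCone_insert (g : ι → F) (a : ι) (A : Finset ι) :
    closedCone g (insert a A) = closedCone g A ∩ {z | 0 ≤ ⟪g a, z⟫} := by
  ext z
  simp [closedCone, and_comm]

lemma openCone_congr {g g' : ι → F} {A : Finset ι} (hg : ∀ i ∈ A, g i = g' i) :
    openCone g A = openCone g' A :=
  Set.ext fun _ => forall₂_congr fun i hi => by rw [hg i hi]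

lemma closedCone_congr {g g' : ι → F} {A : Finset ι} (hg : ∀ i ∈ A, g i = g' i) :
    closedCone g A = closedCone g' A :=
  Set.ext fun _ => forall₂_congr fun i hi => by rw [hg i hi]

lemma openCone_subset_closedCone (g : ι → F) (A : Finset ι) : openCone g A ⊆ closedCone g A :=
  fun _ hz i hi => (hz i hi).le

lemma isOpen_openCone (g : ι → F) (A : Finset ι) : IsOpen (openCone g A) := by
  simp only [openCone, ofPred_forall]
  exact isOpen_biInter_finset fun i _ => isOpen_lt continuous_const (by fun_prop)

lemma isClosed_closedCone (g : ι → F) (A : Finset ι) : IsClosed (closedCone g A) := by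
  simp only [closedCone, ofPred_forall]
  exact isClosed_biInter fun i _ => isClosed_le continuous_const (by fun_prop)

lemma convex_openCone (g : ι → F) (A : Finset ι) : Convex ℝ (openCone g A) := by
  simp only [openCone, ofPred_forall]
  exact convex_iInter₂ fun i _ => convex_halfSpace_gt (innerₛₗ ℝ (g i)).isLinear 0

lemma convex_closedCone (g : ι → F) (A : Finset ι) : Convex ℝ (closedCone g A) := by
  simp only [closedCone, ofPred_forall]
  exact convex_iInter₂ fun i _ => convex_halfSpace_ge (innerₛₗ ℝ (g i)).isLinear 0

lemma add_smul_mem_openCone {g : ι → F} {A : Finset ι} {y u : F} (hy : y ∈ closedCone g A)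
    (hu : u ∈ openCone g A) {t : ℝ} (ht : 0 < t) : y + t • u ∈ openCone g A := by
  intro i hi
  rw [inner_add_right, inner_smul_right]
  exact add_pos_of_nonneg_of_pos (hy i hi) (mul_pos ht (hu i hi))

lemma closure_inter_openCone {V : Submodule ℝ F} (hVc : IsClosed (V : Set F)) {g : ι → F}
    {A : Finset ι} (hU : ((V : Set F) ∩ openCone g A).Nonempty) :
    closure ((V : Set F) ∩ openCone g A) = (V : Set F) ∩ closedCone g A := by
  refine Subset.antisymm (closure_minimal
    (inter_subset_inter_right _ (openCone_subset_closedCone g A))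
    (hVc.inter (isClosed_closedCone g A))) ?_
  rintro y ⟨hyV, hy⟩
  obtain ⟨u, huV, hu⟩ := hU
  have tendsto_y : Filter.Tendsto (fun t : ℝ => y + t • u) (nhdsWithin 0 (Ioi 0)) (nhds y) := by
    have : Continuous fun t : ℝ => y + t • u := by fun_prop
    simpa using (this.tendsto 0).mono_left nhdsWithin_le_nhds
  refine mem_closure_of_tendsto tendsto_y ?_
  filter_upwards [self_mem_nhdsWithin] with t ht
  exact ⟨V.add_mem hyV (V.smul_mem t huV), add_smul_mem_openCone hy hu ht⟩

lemma eventually_add_smul_mem_closedCone {g : ι → F} {A : Finset ι} {y v : F}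
    (hy : y ∈ closedCone g A) (hv : v ∈ minFlat g A y) :
    ∀ᶠ t : ℝ in nhds 0, y + t • v ∈ closedCone g A := by
  refine (Finset.eventually_all A).2 fun i hi => ?_
  rcases (hy i hi).eq_or_lt with h0 | hpos
  · refine Filter.Eventually.of_forall fun t => ?_
    rw [inner_add_right, inner_smul_right, ← h0, mem_minFlat.1 hv i hi h0.symm, mul_zero, add_zero]
  · have : Continuous fun t : ℝ => ⟪g i, y + t • v⟫ := by fun_prop
    exact (this.continuousAt.eventually_const_lt (by simpa using hpos)).mono fun _ => le_of_lt

lemma nonempty_inter_inner_pos_of_mem_closure {S : Set F} {b y : F} (hy : y ∈ closure S)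
    (hby : 0 < ⟪b, y⟫) : (S ∩ {z | 0 < ⟪b, z⟫}).Nonempty := by
  rw [inter_comm]
  exact mem_closure_iff.1 hy _ (isOpen_lt continuous_const (by fun_prop)) hby

lemma exists_pos_add_smul_mem_closedCone {g : ι → F} {A : Finset ι} {y v : F}
    (hy : y ∈ closedCone g A) (hv : v ∈ minFlat g A y) :
    ∃ t : ℝ, 0 < t ∧ y + t • v ∈ closedCone g A := by
  have near := (eventually_add_smul_mem_closedCone hy hv).filter_mono
    (nhdsWithin_le_nhds (s := Ioi (0 : ℝ)))
  obtain ⟨t, ht, ht0⟩ := (near.and self_mem_nhdsWithin).exists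
  exact ⟨t, ht0, ht⟩

lemma nonempty_inter_openCone_inter_inner_pos {V : Submodule ℝ F} {b : F} (hV : ¬V ≤ (ℝ ∙ b)ᗮ)
    {g : ι → F} {A : Finset ι} {u : F} (hu : u ∈ (V : Set F) ∩ openCone g A) (hbu : 0 ≤ ⟪b, u⟫) :
    ((V : Set F) ∩ openCone g A ∩ {z | 0 < ⟪b, z⟫}).Nonempty := by
  obtain ⟨v, hvV, hv⟩ := exists_mem_inner_pos hV
  have hcont : Continuous fun t : ℝ => u + t • v := by fun_prop
  have near : ∀ᶠ t : ℝ in nhdsWithin 0 (Ioi 0), u + t • v ∈ openCone g A :=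
    (hcont.continuousAt.eventually_mem
      ((isOpen_openCone g A).mem_nhds (by simpa using hu.2))).filter_mono nhdsWithin_le_nhds
  obtain ⟨t, ht, ht0⟩ := (near.and self_mem_nhdsWithin).exists
  refine ⟨u + t • v, ⟨V.add_mem hu.1 (V.smul_mem t hvV), ht⟩, ?_⟩
  rw [mem_ofPred_eq, inner_add_right, inner_smul_right]
  exact add_pos_of_nonneg_of_pos hbu (mul_pos ht0 hv)

lemma nonempty_inter_openCone_inter_inner_neg {V : Submodule ℝ F} {b : F} (hV : ¬V ≤ (ℝ ∙ b)ᗮ)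
    {g : ι → F} {A : Finset ι} {u : F} (hu : u ∈ (V : Set F) ∩ openCone g A) (hbu : ⟪b, u⟫ ≤ 0) :
    ((V : Set F) ∩ openCone g A ∩ {z | ⟪b, z⟫ < 0}).Nonempty := by
  rw [← span_singleton_neg] at hV
  simpa only [inner_neg_left, neg_pos] using
    nonempty_inter_openCone_inter_inner_pos hV hu (by simpa using hbu)

lemma inter_openCone_nonempty_iff {V : Submodule ℝ F} {b : F} (hV : ¬V ≤ (ℝ ∙ b)ᗮ) {g : ι → F}
    {A : Finset ι} :
    ((V : Set F) ∩ openCone g A).Nonempty ↔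
      ((V : Set F) ∩ openCone g A ∩ {z | 0 < ⟪b, z⟫}).Nonempty ∨
        ((V : Set F) ∩ openCone g A ∩ {z | ⟪b, z⟫ < 0}).Nonempty := by
  constructor
  · rintro ⟨u, hu⟩
    exact (le_total 0 ⟪b, u⟫).imp (nonempty_inter_openCone_inter_inner_pos hV hu)
      (nonempty_inter_openCone_inter_inner_neg hV hu)
  · rintro (⟨u, hu, -⟩ | ⟨u, hu, -⟩) <;> exact ⟨u, hu⟩

lemma inf_orthogonal_inter_openCone_nonempty_iff {V : Submodule ℝ F} {b : F}
    (hV : ¬V ≤ (ℝ ∙ b)ᗮ) {g : ι → F} {A : Finset ι} :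
    (((V ⊓ (ℝ ∙ b)ᗮ : Submodule ℝ F) : Set F) ∩ openCone g A).Nonempty ↔
      ((V : Set F) ∩ openCone g A ∩ {z | 0 < ⟪b, z⟫}).Nonempty ∧
        ((V : Set F) ∩ openCone g A ∩ {z | ⟪b, z⟫ < 0}).Nonempty := by
  constructor
  · rintro ⟨u, ⟨huV, hbu⟩, hu⟩
    rw [SetLike.mem_coe, Submodule.mem_orthogonal_singleton_iff_inner_right] at hbu
    exact ⟨nonempty_inter_openCone_inter_inner_pos hV ⟨huV, hu⟩ hbu.ge,
      nonempty_inter_openCone_inter_inner_neg hV ⟨huV, hu⟩ hbu.le⟩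
  · rintro ⟨⟨u, hu, hbu⟩, v, hv, hbv⟩
    obtain ⟨w, hw, hbw⟩ := exists_mem_segment_inner_eq_zero hbv.le hbu.le
    have hwU := (V.convex.inter (convex_openCone g A)).segment_subset hv hu hw
    exact ⟨w, ⟨hwU.1, Submodule.mem_orthogonal_singleton_iff_inner_right.2 hbw⟩, hwU.2⟩

end Cones

section WhitneySum

open Module

variable {ι F : Type*} [NormedAddCommGroup F] [InnerProductSpace ℝ F]

/-- The modulus of the coefficient of `t ^ k` in the characteristic polynomial of the arrangement
induced by the hyperplanes `(h i)ᗮ`, `i ∈ A`, on the subspace `V`, in the form given by Whitney's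
theorem. The exponent `finrank V + k` stands for `finrank V - k`, which has the same parity. -/
def whitneySum (h : ι → F) (A : Finset ι) (V : Submodule ℝ F) (k : ℕ) : ℤ :=
  ∑ B ∈ A.powerset,
    if finrank ℝ ↥(V ⊓ flat h B) = k then (-1) ^ (B.card + finrank ℝ V + k) else 0

lemma whitneySum_empty (h : ι → F) (V : Submodule ℝ F) (k : ℕ) :
    whitneySum h ∅ V k = if finrank ℝ V = k then 1 else 0 := by
  have flat_empty : flat h ∅ = ⊤ := by simp [flat]
  rw [whitneySum, Finset.powerset_empty, Finset.sum_singleton, Finset.card_empty, zero_add,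
    flat_empty, inf_top_eq]
  refine ite_congr rfl (fun hk => ?_) fun _ => rfl
  rw [hk, Even.neg_one_pow ⟨k, rfl⟩]

lemma whitneySum_insert_of_not_le {h : ι → F} {a : ι} {A : Finset ι} {V : Submodule ℝ F}
    [FiniteDimensional ℝ V] (ha : a ∉ A) (hV : ¬V ≤ (ℝ ∙ h a)ᗮ) (k : ℕ) :
    whitneySum h (insert a A) V k = whitneySum h A V k + whitneySum h A (V ⊓ (ℝ ∙ h a)ᗮ) k := by
  rw [whitneySum, Finset.sum_powerset_insert ha, whitneySum, whitneySum]
  refine congrArg₂ _ rfl (Finset.sum_congr rfl fun B hB => ?_)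
  rw [flat_insert, ← inf_assoc, ← finrank_inf_orthogonal_singleton_add_one hV,
    Finset.card_insert_of_notMem fun haB => ha (Finset.mem_powerset.1 hB haB)]
  refine if_congr Iff.rfl ?_ rfl
  ring

lemma whitneySum_insert_of_le {h : ι → F} {a : ι} {A : Finset ι} {V : Submodule ℝ F}
    (ha : a ∉ A) (hV : V ≤ (ℝ ∙ h a)ᗮ) (k : ℕ) : whitneySum h (insert a A) V k = 0 := by
  rw [whitneySum, Finset.sum_powerset_insert ha, ← Finset.sum_add_distrib]
  refine Finset.sum_eq_zero fun B hB => ?_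
  rw [flat_insert, ← inf_assoc, inf_eq_left.2 hV,
    Finset.card_insert_of_notMem fun haB => ha (Finset.mem_powerset.1 hB haB)]
  split_ifs
  · ring
  · rfl

end WhitneySum

section NearestPoint

lemma isNearestPt_iff_inner_le_zero {C : Set (E d)} (hC : Convex ℝ C) {x y : E d} :
    IsNearestPt C x y ↔ y ∈ C ∧ ∀ z ∈ C, ⟪x - y, z - y⟫ ≤ 0 := by
  refine and_congr_right fun hy => ?_
  have : Nonempty C := ⟨⟨y, hy⟩⟩
  have bdd : BddBelow (range fun w : C => ‖x - w‖) := ⟨0, by rintro _ ⟨w, rfl⟩; positivity⟩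
  rw [← norm_eq_iInf_iff_real_inner_le_zero hC hy]
  simp only [dist_eq_norm]
  refine ⟨fun le => le_antisymm (le_ciInf fun w => le w w.2) (ciInf_le bdd ⟨y, hy⟩), ?_⟩
  exact fun eq z hz => eq.trans_le (ciInf_le bdd ⟨z, hz⟩)

lemma IsNearestPt.eq {C : Set (E d)} (hC : Convex ℝ C) {x y y' : E d}
    (hy : IsNearestPt C x y) (hy' : IsNearestPt C x y') : y = y' := by
  have h₁ := ((isNearestPt_iff_inner_le_zero hC).1 hy).2 y' hy'.1
  have h₂ := ((isNearestPt_iff_inner_le_zero hC).1 hy').2 y hy.1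
  have sum_eq : ⟪x - y, y' - y⟫ + ⟪x - y', y - y'⟫ = ⟪y - y', y - y'⟫ := by
    simp only [inner_sub_left, inner_sub_right, real_inner_comm y y']
    ring
  exact sub_eq_zero.1 (real_inner_self_nonpos.1 (sum_eq ▸ add_nonpos h₁ h₂))

lemma exists_isNearestPt {C : Set (E d)} (hC : IsClosed C) (hne : C.Nonempty) (x : E d) :
    ∃ y, IsNearestPt C x y := by
  obtain ⟨y, hy, hxy⟩ := hC.exists_infDist_eq_dist hne x
  exact ⟨y, hy, fun z hz => hxy ▸ Metric.infDist_le_dist_of_mem hz⟩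

lemma IsNearestPt.mono {C D : Set (E d)} {x y : E d} (hy : IsNearestPt C x y) (hDC : D ⊆ C)
    (hyD : y ∈ D) : IsNearestPt D x y :=
  ⟨hyD, fun z hz => hy.2 z (hDC hz)⟩

lemma isNearestPt_inter_iff_of_mem {C D : Set (E d)} (hC : Convex ℝ C) (hD : Convex ℝ D)
    {x y w : E d} (hy : IsNearestPt C x y) (hyD : y ∈ D) :
    IsNearestPt (C ∩ D) x w ↔ IsNearestPt C x w := by
  have hyCD := hy.mono inter_subset_left ⟨hy.1, hyD⟩
  constructor <;> intro hw
  · exact hw.eq (hC.inter hD) hyCD ▸ hy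
  · exact hw.eq hC hy ▸ hyCD

/-- The segment from a point of the half-space to the nearest point of `C`, which lies on the other
side, crosses the boundary hyperplane, and distances to `x` do not increase along it. -/
lemma isNearestPt_inter_inner_nonpos_iff {C : Set (E d)} (hC : Convex ℝ C) {b x y w : E d}
    (hy : IsNearestPt C x y) (hby : 0 ≤ ⟪b, y⟫) :
    IsNearestPt (C ∩ {z | ⟪b, z⟫ ≤ 0}) x w ↔ IsNearestPt (C ∩ {z | ⟪b, z⟫ = 0}) x w := by
  have exists_crossing : ∀ z ∈ C ∩ {z | ⟪b, z⟫ ≤ 0},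
      ∃ z' ∈ C ∩ {z | ⟪b, z⟫ = 0}, dist x z' ≤ dist x z := fun z ⟨hz, hbz⟩ => by
    obtain ⟨z', hz', hbz'⟩ := exists_mem_segment_inner_eq_zero hbz hby
    refine ⟨z', ⟨hC.segment_subset hz hy.1 hz', hbz'⟩, ?_⟩
    have le_max := (convexOn_univ_dist x).le_max_of_mem_segment (mem_univ z) (mem_univ y) hz'
    simpa only [dist_comm _ x, max_eq_left (hy.2 z hz)] using le_max
  have subset : C ∩ {z | ⟪b, z⟫ = 0} ⊆ C ∩ {z | ⟪b, z⟫ ≤ 0} :=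
    inter_subset_inter_right C fun _ => le_of_eq
  constructor
  · intro hw
    obtain ⟨w', hw', hle⟩ := exists_crossing w hw.1
    have hconv := hC.inter (convex_halfSpace_le (innerₛₗ ℝ b).isLinear 0)
    have hw'_nearest : IsNearestPt (C ∩ {z | ⟪b, z⟫ ≤ 0}) x w' :=
      ⟨subset hw', fun z hz => hle.trans (hw.2 z hz)⟩
    exact hw.mono subset (hw.eq hconv hw'_nearest ▸ hw')
  · refine fun hw => ⟨subset hw.1, fun z hz => ?_⟩
    obtain ⟨z', hz', hle⟩ := exists_crossing z hz
    exact (hw.2 z' hz').trans hle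

end NearestPoint

section Cells

open Module

variable {ι : Type*} {g g' : ι → E d} {a : ι} {A : Finset ι} {V : Submodule ℝ (E d)} {x y : E d}
  {k : ℕ}

lemma IsNearestPt.starProjection_eq (hy : IsNearestPt ((V : Set (E d)) ∩ closedCone g A) x y) :
    (V ⊓ minFlat g A y).starProjection x = y := by
  have convex_cell := V.convex.inter (convex_closedCone g A)
  have inner_le : ∀ v ∈ V ⊓ minFlat g A y, ⟪x - y, v⟫ ≤ 0 := fun v ⟨hvV, hv⟩ => by
    obtain ⟨t, ht, hmem⟩ := exists_pos_add_smul_mem_closedCone hy.1.2 hv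
    have := ((isNearestPt_iff_inner_le_zero convex_cell).1 hy).2 _
      ⟨V.add_mem hy.1.1 (V.smul_mem t hvV), hmem⟩
    rw [add_sub_cancel_left, inner_smul_right] at this
    exact nonpos_of_mul_nonpos_right this ht
  refine Submodule.eq_starProjection_of_mem_of_inner_eq_zero
    ⟨hy.1.1, self_mem_minFlat g A y⟩ fun v hv => le_antisymm (inner_le v hv) ?_
  simpa using inner_le (-v) (neg_mem hv)

/-- The cell of `V` with inner normals `g i`, `i ∈ A`, has nonempty relative interior, and its
nearest point to `x` lies in the relative interior of a face of dimension `k`. -/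
def CellProjDimEq (g : ι → E d) (A : Finset ι) (V : Submodule ℝ (E d)) (x : E d) (k : ℕ) : Prop :=
  ((V : Set (E d)) ∩ openCone g A).Nonempty ∧
    ∃ y, IsNearestPt ((V : Set (E d)) ∩ closedCone g A) x y ∧
      finrank ℝ ↥(V ⊓ minFlat g A y) = k

/-- The projection of `x` to a flat of the arrangement induced on `V` lies on no hyperplane of the
arrangement other than those containing the flat. -/
def IsGeneric (g : ι → E d) (A : Finset ι) (V : Submodule ℝ (E d)) (x : E d) : Prop :=
  ∀ B ⊆ A, ∀ i ∈ A, ⟪g i, (V ⊓ flat g B).starProjection x⟫ = 0 → V ⊓ flat g B ≤ (ℝ ∙ g i)ᗮ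

lemma IsGeneric.of_insert (hx : IsGeneric g (insert a A) V x) : IsGeneric g A V x :=
  fun B hB i hi => hx B (hB.trans (Finset.subset_insert a A)) i (Finset.mem_insert_of_mem hi)

lemma IsGeneric.inf_orthogonal (hx : IsGeneric g (insert a A) V x) :
    IsGeneric g A (V ⊓ (ℝ ∙ g a)ᗮ) x := fun B hB i hi => by
  have := hx (insert a B) (Finset.insert_subset_insert a hB) i (Finset.mem_insert_of_mem hi)
  simpa only [flat_insert, ← inf_assoc] using this

lemma IsGeneric.inf_minFlat_insert (hx : IsGeneric g (insert a A) V x)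
    (hy : IsNearestPt ((V : Set (E d)) ∩ closedCone g A) x y) :
    V ⊓ minFlat g (insert a A) y = V ⊓ minFlat g A y := by
  by_cases h0 : ⟪g a, y⟫ = 0
  · have le : V ⊓ minFlat g A y ≤ (ℝ ∙ g a)ᗮ :=
      hx _ ((zeroSet_subset g A y).trans (Finset.subset_insert a A)) a (Finset.mem_insert_self a A)
        ((congrArg (inner ℝ (g a)) hy.starProjection_eq).trans h0)
    rw [minFlat_insert_of_inner_eq_zero h0, inf_left_comm, inf_eq_right.2 le]
  · rw [minFlat_insert_of_inner_ne_zero h0]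

lemma inf_orthogonal_inter_closedCone (g : ι → E d) (A : Finset ι) (V : Submodule ℝ (E d))
    (b : E d) : ((V ⊓ (ℝ ∙ b)ᗮ : Submodule ℝ (E d)) : Set (E d)) ∩ closedCone g A =
      (V : Set (E d)) ∩ closedCone g A ∩ {z | ⟪b, z⟫ = 0} := by
  ext z
  simp [Submodule.mem_orthogonal_singleton_iff_inner_right, and_right_comm]

lemma isGeneric_congr (hspan : ∀ i ∈ A, (ℝ ∙ g' i) = ℝ ∙ g i) :
    IsGeneric g' A V x ↔ IsGeneric g A V x := by
  refine forall₂_congr fun B hB => forall₂_congr fun i hi => ?_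
  simp only [flat_congr fun j hj => hspan j (hB hj),
    ← Submodule.mem_orthogonal_singleton_iff_inner_right, hspan i hi]

lemma cellProjDimEq_congr (hg : ∀ i ∈ A, g' i = g i) :
    CellProjDimEq g' A V x k ↔ CellProjDimEq g A V x k := by
  rw [CellProjDimEq, CellProjDimEq, openCone_congr hg, closedCone_congr hg,
    minFlat_congr fun i hi => congrArg (ℝ ∙ ·) (hg i hi)]

lemma cellProjDimEq_empty : CellProjDimEq g ∅ V x k ↔ finrank ℝ V = k := by
  have open_eq : (V : Set (E d)) ∩ openCone g ∅ = V := by simp [openCone]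
  have closed_eq : (V : Set (E d)) ∩ closedCone g ∅ = V := by simp [closedCone]
  have flat_eq (y : E d) : V ⊓ minFlat g ∅ y = V := by simp [minFlat, zeroSet, flat]
  obtain ⟨y, hy⟩ := exists_isNearestPt V.closed_of_finiteDimensional ⟨0, V.zero_mem⟩ x
  rw [CellProjDimEq, open_eq, closed_eq]
  refine ⟨fun ⟨_, z, _, hz⟩ => ?_, fun hk => ⟨⟨0, V.zero_mem⟩, y, hy, ?_⟩⟩
  · rwa [flat_eq] at hz
  · rwa [flat_eq]

lemma cellProjDimEq_insert : CellProjDimEq g (insert a A) V x k ↔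
    ((V : Set (E d)) ∩ openCone g A ∩ {z | 0 < ⟪g a, z⟫}).Nonempty ∧
      ∃ y, IsNearestPt ((V : Set (E d)) ∩ closedCone g A ∩ {z | 0 ≤ ⟪g a, z⟫}) x y ∧
        finrank ℝ ↥(V ⊓ minFlat g (insert a A) y) = k := by
  rw [CellProjDimEq, openCone_insert, closedCone_insert, inter_assoc, inter_assoc]

lemma cellProjDimEq_insert_of_neg (ha : g' a = -g a) (hg : ∀ i ∈ A, g' i = g i) :
    CellProjDimEq g' (insert a A) V x k ↔
    ((V : Set (E d)) ∩ openCone g A ∩ {z | ⟪g a, z⟫ < 0}).Nonempty ∧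
      ∃ y, IsNearestPt ((V : Set (E d)) ∩ closedCone g A ∩ {z | ⟪g a, z⟫ ≤ 0}) x y ∧
        finrank ℝ ↥(V ⊓ minFlat g (insert a A) y) = k := by
  have span_eq : ∀ i ∈ insert a A, (ℝ ∙ g' i) = ℝ ∙ g i := fun i hi => by
    rcases Finset.mem_insert.1 hi with rfl | hiA
    · rw [ha, span_singleton_neg]
    · rw [hg i hiA]
  rw [cellProjDimEq_insert, minFlat_congr span_eq]
  simp only [openCone_congr hg, closedCone_congr hg, ha, inner_neg_left, neg_pos, neg_nonneg]

lemma cellProjDimEq_iff_of_isGeneric (hx : IsGeneric g (insert a A) V x) :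
    CellProjDimEq g A V x k ↔ ((V : Set (E d)) ∩ openCone g A).Nonempty ∧
      ∃ y, IsNearestPt ((V : Set (E d)) ∩ closedCone g A) x y ∧
        finrank ℝ ↥(V ⊓ minFlat g (insert a A) y) = k :=
  and_congr_right fun _ => exists_congr fun z => and_congr_right fun hz => by
    rw [hx.inf_minFlat_insert hz]

lemma cellProjDimEq_inf_orthogonal_iff :
    CellProjDimEq g A (V ⊓ (ℝ ∙ g a)ᗮ) x k ↔
      (((V ⊓ (ℝ ∙ g a)ᗮ : Submodule ℝ (E d)) : Set (E d)) ∩ openCone g A).Nonempty ∧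
        ∃ y, IsNearestPt ((V : Set (E d)) ∩ closedCone g A ∩ {z | ⟪g a, z⟫ = 0}) x y ∧
          finrank ℝ ↥(V ⊓ minFlat g (insert a A) y) = k := by
  rw [CellProjDimEq, inf_orthogonal_inter_closedCone]
  refine and_congr_right fun _ => exists_congr fun z => and_congr_right fun hz => ?_
  rw [minFlat_insert_of_inner_eq_zero hz.1.2, inf_assoc]

lemma ite_and_add_ite_and (p q n : Prop) :
    ((if p ∧ n then 1 else 0) + if q ∧ n then 1 else 0 : ℕ) =
      (if (p ∨ q) ∧ n then 1 else 0) + if (p ∧ q) ∧ n then 1 else 0 := by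
  by_cases p <;> by_cases q <;> simp [*]

/-- If the nearest point `y` lies off the wall `(g a)ᗮ`, it is the nearest point of the half of the
cell on its own side, and the nearest point of the other half is that of the wall. -/
lemma cell_recursion_of_nonneg (hV : ¬V ≤ (ℝ ∙ g a)ᗮ)
    (hx : IsGeneric g (insert a A) V x) (ha : g' a = -g a) (hg : ∀ i ∈ A, g' i = g i)
    (hy : IsNearestPt ((V : Set (E d)) ∩ closedCone g A) x y) (hay : 0 ≤ ⟪g a, y⟫) :
    ((if CellProjDimEq g (insert a A) V x k then 1 else 0) +
      if CellProjDimEq g' (insert a A) V x k then 1 else 0 : ℕ) =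
    (if CellProjDimEq g A V x k then 1 else 0) +
      if CellProjDimEq g A (V ⊓ (ℝ ∙ g a)ᗮ) x k then 1 else 0 := by
  have convex_cell := V.convex.inter (convex_closedCone g A)
  have pos_side (w : E d) := isNearestPt_inter_iff_of_mem convex_cell
    (convex_halfSpace_ge (innerₛₗ ℝ (g a)).isLinear 0) (w := w) hy hay
  simp only [innerₛₗ_apply_apply] at pos_side
  simp only [cellProjDimEq_insert, cellProjDimEq_insert_of_neg ha hg,
    cellProjDimEq_iff_of_isGeneric hx, cellProjDimEq_inf_orthogonal_iff, pos_side,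
    isNearestPt_inter_inner_nonpos_iff convex_cell hy hay, inter_openCone_nonempty_iff hV,
    inf_orthogonal_inter_openCone_nonempty_iff hV]
  rcases hay.eq_or_lt with on_wall | off_wall
  · have wall_side (w : E d) := isNearestPt_inter_iff_of_mem convex_cell
      (convex_hyperplane (innerₛₗ ℝ (g a)).isLinear 0) (w := w) hy on_wall.symm
    simp only [innerₛₗ_apply_apply] at wall_side
    simp only [wall_side]
    exact ite_and_add_ite_and ..
  · have cut : ((V : Set (E d)) ∩ openCone g A ∩ {z | ⟪g a, z⟫ < 0}).Nonempty →
        ((V : Set (E d)) ∩ openCone g A ∩ {z | 0 < ⟪g a, z⟫}).Nonempty := fun hneg =>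
      nonempty_inter_inner_pos_of_mem_closure
        ((closure_inter_openCone V.closed_of_finiteDimensional hneg.left).symm ▸ hy.1) off_wall
    simp only [or_iff_left_of_imp cut, and_iff_right_of_imp cut]

lemma cell_recursion (hV : ¬V ≤ (ℝ ∙ g a)ᗮ) (hx : IsGeneric g (insert a A) V x)
    (ha : g' a = -g a) (hg : ∀ i ∈ A, g' i = g i) :
    ((if CellProjDimEq g (insert a A) V x k then 1 else 0) +
      if CellProjDimEq g' (insert a A) V x k then 1 else 0 : ℕ) =
    (if CellProjDimEq g A V x k then 1 else 0) +
      if CellProjDimEq g A (V ⊓ (ℝ ∙ g a)ᗮ) x k then 1 else 0 := by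
  obtain ⟨y, hy⟩ := exists_isNearestPt
    (V.closed_of_finiteDimensional.inter (isClosed_closedCone g A))
    ⟨0, V.zero_mem, fun i _ => (inner_zero_right (g i)).ge⟩ x
  have span_a : (ℝ ∙ g' a) = ℝ ∙ g a := by rw [ha, span_singleton_neg]
  rcases le_total 0 ⟪g a, y⟫ with hay | hay
  · exact cell_recursion_of_nonneg hV hx ha hg hy hay
  · have span_eq : ∀ i ∈ insert a A, (ℝ ∙ g' i) = ℝ ∙ g i :=
      Finset.forall_mem_insert .. |>.2 ⟨span_a, fun i hi => congrArg (ℝ ∙ ·) (hg i hi)⟩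
    have swapped := cell_recursion_of_nonneg (g := g') (g' := g) (k := k) (by rwa [span_a])
      ((isGeneric_congr span_eq).2 hx) (by rw [ha, neg_neg]) (fun i hi => (hg i hi).symm)
      (by rwa [closedCone_congr hg]) (by rwa [ha, inner_neg_left, neg_nonneg])
    rw [add_comm, swapped, span_a]
    simp only [cellProjDimEq_congr hg]

/-- The normals `h i` with the orientations for `i ∉ P` reversed. -/
def reorient (h : ι → E d) (P : Finset ι) (i : ι) : E d :=
  if i ∈ P then h i else -h i

lemma span_reorient (h : ι → E d) (P : Finset ι) (i : ι) : (ℝ ∙ reorient h P i) = ℝ ∙ h i := by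
  unfold reorient
  split_ifs
  · rfl
  · exact span_singleton_neg (h i)

/-- The number of cells of the arrangement induced by the hyperplanes `(h i)ᗮ`, `i ∈ A`, on `V` for
which the nearest point to `x` lies in the relative interior of a face of dimension `k`. -/
def cellCount (h : ι → E d) (A : Finset ι) (V : Submodule ℝ (E d)) (x : E d) (k : ℕ) : ℕ :=
  ∑ P ∈ A.powerset, if CellProjDimEq (reorient h P) A V x k then 1 else 0

variable {h : ι → E d}

lemma cellCount_empty (h : ι → E d) (V : Submodule ℝ (E d)) (x : E d) (k : ℕ) :
    cellCount h ∅ V x k = if finrank ℝ V = k then 1 else 0 := by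
  simp only [cellCount, Finset.powerset_empty, Finset.sum_singleton, cellProjDimEq_empty]

lemma cellCount_insert_of_not_le (ha : a ∉ A) (hV : ¬V ≤ (ℝ ∙ h a)ᗮ)
    (hx : IsGeneric h (insert a A) V x) (k : ℕ) :
    cellCount h (insert a A) V x k = cellCount h A V x k + cellCount h A (V ⊓ (ℝ ∙ h a)ᗮ) x k := by
  rw [cellCount, Finset.sum_powerset_insert ha, ← Finset.sum_add_distrib, cellCount, cellCount,
    ← Finset.sum_add_distrib]
  refine Finset.sum_congr rfl fun P hP => ?_
  have haP : a ∉ P := fun haP => ha (Finset.mem_powerset.1 hP haP)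
  rw [← span_reorient h P a] at hV ⊢
  refine cell_recursion hV ((isGeneric_congr fun i _ => span_reorient h P i).2 hx) ?_ fun i hi => ?_
  · simp [reorient, haP]
  · simp [reorient, ne_of_mem_of_not_mem hi ha]

lemma cellCount_eq_zero_of_le (ha : a ∈ A) (hV : V ≤ (ℝ ∙ h a)ᗮ) (x : E d) (k : ℕ) :
    cellCount h A V x k = 0 := by
  refine Finset.sum_eq_zero fun P _ => if_neg ?_
  rintro ⟨⟨u, huV, hu⟩, -⟩
  rw [← span_reorient h P a] at hV
  exact (hu a ha).ne' (Submodule.mem_orthogonal_singleton_iff_inner_right.1 (hV huV))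

theorem cellCount_eq_whitneySum (hx : IsGeneric h A V x) (k : ℕ) :
    (cellCount h A V x k : ℤ) = whitneySum h A V k := by
  induction A using Finset.induction_on generalizing V with
  | empty => rw [cellCount_empty, whitneySum_empty, Nat.cast_ite, Nat.cast_one, Nat.cast_zero]
  | insert a A ha ih =>
    by_cases hV : V ≤ (ℝ ∙ h a)ᗮ
    · rw [cellCount_eq_zero_of_le (Finset.mem_insert_self a A) hV, whitneySum_insert_of_le ha hV,
        Nat.cast_zero]
    · rw [cellCount_insert_of_not_le ha hV hx, whitneySum_insert_of_not_le ha hV, Nat.cast_add,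
        ih hx.of_insert, ih hx.inf_orthogonal]

end Cells

section Faces

open Module

lemma sdim_coe_submodule (V : Submodule ℝ (E d)) : sdim (V : Set (E d)) = finrank ℝ V := by
  have span_eq : affineSpan ℝ (V : Set (E d)) = V.toAffineSubspace :=
    AffineSubspace.affineSpan_coe V.toAffineSubspace
  rw [sdim, span_eq, Submodule.toAffineSubspace_direction]

lemma exists_pos_lineMap_neg_mem_of_mem_intrinsicInterior {S : Set (E d)} {y z : E d}
    (hy : y ∈ intrinsicInterior ℝ S) (hz : z ∈ S) :
    ∃ t : ℝ, 0 < t ∧ AffineMap.lineMap y z (-t) ∈ S := by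
  obtain ⟨y, hy, rfl⟩ := mem_intrinsicInterior.1 hy
  have line_mem (t : ℝ) : AffineMap.lineMap (y : E d) z (-t) ∈ affineSpan ℝ S :=
    AffineMap.lineMap_mem _ y.2 (subset_affineSpan ℝ S hz)
  have line_cont : Continuous fun t : ℝ => (⟨_, line_mem t⟩ : affineSpan ℝ S) := by
    refine Continuous.subtype_mk ?_ _
    exact AffineMap.lineMap_continuous.comp continuous_neg
  have line_zero : (⟨_, line_mem 0⟩ : affineSpan ℝ S) = y := Subtype.ext (by simp)
  have near : ∀ᶠ t : ℝ in nhdsWithin 0 (Ioi 0), AffineMap.lineMap (y : E d) z (-t) ∈ S :=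
    (line_cont.continuousAt.eventually_mem
      (by rwa [line_zero, ← mem_interior_iff_mem_nhds])).filter_mono nhdsWithin_le_nhds
  obtain ⟨t, ht, ht0⟩ := (near.and self_mem_nhdsWithin).exists
  exact ⟨t, ht0, ht⟩

variable {ι : Type*} {g : ι → E d} {A : Finset ι} {y : E d}

/-- The smallest face of the closed cone with inner normals `g i`, `i ∈ A`, that contains `y`. -/
def minFace (g : ι → E d) (A : Finset ι) (y : E d) : Set (E d) :=
  closedCone g A ∩ minFlat g A y

lemma affineSpan_minFace (hy : y ∈ closedCone g A) :
    affineSpan ℝ (minFace g A y) = affineSpan ℝ (minFlat g A y : Set (E d)) := by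
  refine le_antisymm (affineSpan_mono ℝ inter_subset_right) (affineSpan_le.2 fun v hv => ?_)
  have hyv : v - y ∈ minFlat g A y := sub_mem hv (self_mem_minFlat g A y)
  obtain ⟨t, ht, hmem⟩ := exists_pos_add_smul_mem_closedCone hy hyv
  have hy_mem : y ∈ affineSpan ℝ (minFace g A y) :=
    subset_affineSpan ℝ _ ⟨hy, self_mem_minFlat g A y⟩
  have ht_mem : y + t • (v - y) ∈ affineSpan ℝ (minFace g A y) :=
    subset_affineSpan ℝ _ ⟨hmem, add_mem (self_mem_minFlat g A y) (Submodule.smul_mem _ t hyv)⟩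
  have v_eq : AffineMap.lineMap y (y + t • (v - y)) t⁻¹ = v := by
    simp [AffineMap.lineMap_apply, smul_smul, inv_mul_cancel₀ ht.ne']
  exact v_eq ▸ AffineMap.lineMap_mem _ hy_mem ht_mem

lemma sdim_minFace (hy : y ∈ closedCone g A) :
    sdim (minFace g A y) = finrank ℝ (minFlat g A y) := by
  rw [sdim, affineSpan_minFace hy, ← sdim, sdim_coe_submodule]

lemma mem_intrinsicInterior_minFace (hy : y ∈ closedCone g A) :
    y ∈ intrinsicInterior ℝ (minFace g A y) := by
  have hy_mem : y ∈ minFace g A y := ⟨hy, self_mem_minFlat g A y⟩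
  refine mem_intrinsicInterior.2 ⟨⟨y, subset_affineSpan ℝ _ hy_mem⟩, ?_, rfl⟩
  have inactive_open := (isOpen_openCone g (A \ zeroSet g A y)).preimage
    (continuous_subtype_val (p := fun z => z ∈ affineSpan ℝ (minFace g A y)))
  refine mem_interior.2 ⟨_, ?_, inactive_open, fun i hi => ?_⟩
  · rintro ⟨z, hz⟩ hz_pos
    have hz_flat : z ∈ minFlat g A y :=
      (affineSpan_le (Q := (minFlat g A y).toAffineSubspace)).2 inter_subset_right hz
    refine ⟨fun i hi => ?_, hz_flat⟩
    by_cases hi0 : ⟪g i, y⟫ = 0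
    · exact (mem_minFlat.1 hz_flat i hi hi0).ge
    · exact (hz_pos i (by simp [mem_zeroSet, hi, hi0])).le
  · simp only [Finset.mem_sdiff, mem_zeroSet, not_and] at hi
    exact (hy i hi.1).lt_of_ne' (hi.2 hi.1)

lemma isFaceOf_minFace (g : ι → E d) (A : Finset ι) (y : E d) :
    IsFaceOf (closedCone g A) (minFace g A y) := by
  have active_nonneg : ∀ z ∈ closedCone g A, ∀ i ∈ zeroSet g A y, 0 ≤ ⟪g i, z⟫ := fun z hz i hi =>
    hz i (zeroSet_subset g A y hi)
  refine Or.inr ⟨-∑ i ∈ zeroSet g A y, g i, 0, fun z hz => ?_, ?_⟩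
  · rw [inner_neg_left, sum_inner, neg_nonpos]
    exact Finset.sum_nonneg (active_nonneg z hz)
  · ext z
    refine and_congr_right fun hz => ?_
    rw [inner_neg_left, sum_inner, neg_eq_zero,
      Finset.sum_eq_zero_iff_of_nonneg (active_nonneg z hz)]
    exact mem_flat

lemma IsFaceOf.subset {P S : Set (E d)} (hS : IsFaceOf P S) : S ⊆ P := by
  rcases hS with rfl | ⟨u, c, -, rfl⟩
  · exact Subset.rfl
  · exact fun z hz => hz.1

lemma subset_minFace_of_mem_intrinsicInterior {S : Set (E d)} (hS : S ⊆ closedCone g A)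
    (hy : y ∈ intrinsicInterior ℝ S) : S ⊆ minFace g A y := by
  refine fun z hz => ⟨hS hz, mem_minFlat.2 fun i hi hi0 => ?_⟩
  obtain ⟨t, ht, hback⟩ := exists_pos_lineMap_neg_mem_of_mem_intrinsicInterior hy hz
  have back_nonneg := hS hback i hi
  rw [AffineMap.lineMap_apply_module', inner_add_right, inner_smul_right, inner_sub_right,
    hi0] at back_nonneg
  have := hS hz i hi
  nlinarith

lemma IsFaceOf.minFace_subset {S : Set (E d)} (hS : IsFaceOf (closedCone g A) S) (hy : y ∈ S) :
    minFace g A y ⊆ S := by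
  rintro z ⟨hz, hz_flat⟩
  rcases hS with rfl | ⟨u, c, hu, rfl⟩
  · exact hz
  refine ⟨hz, le_antisymm (hu z hz) ?_⟩
  obtain ⟨t, ht, hback⟩ := exists_pos_add_smul_mem_closedCone hy.1
    (sub_mem (self_mem_minFlat g A y) hz_flat)
  have back_le := hu _ hback
  have huy : ⟪u, y⟫ = c := hy.2
  rw [inner_add_right, inner_smul_right, inner_sub_right, huy] at back_le
  nlinarith

lemma IsFaceOf.eq_minFace {S : Set (E d)} (hS : IsFaceOf (closedCone g A) S)
    (hy : y ∈ intrinsicInterior ℝ S) : S = minFace g A y :=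
  (subset_minFace_of_mem_intrinsicInterior hS.subset hy).antisymm
    (hS.minFace_subset (intrinsicInterior_subset hy))

lemma projDimEq_closedCone_iff {x : E d} {k : ℕ} : projDimEq (closedCone g A) x k ↔
    ∃ y, IsNearestPt (closedCone g A) x y ∧ finrank ℝ (minFlat g A y) = k := by
  constructor
  · rintro ⟨y, S, hy, hS, hyS, hk⟩
    exact ⟨y, hy, by rw [← sdim_minFace hy.1, ← hS.eq_minFace hyS, hk]⟩
  · rintro ⟨y, hy, hk⟩
    exact ⟨y, minFace g A y, hy, isFaceOf_minFace g A y, mem_intrinsicInterior_minFace hy.1,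
      by rw [sdim_minFace hy.1, hk]⟩

lemma cellProjDimEq_top_iff {x : E d} {k : ℕ} : CellProjDimEq g A ⊤ x k ↔
    (openCone g A).Nonempty ∧ projDimEq (closedCone g A) x k := by
  rw [CellProjDimEq, projDimEq_closedCone_iff, Submodule.top_coe, univ_inter, univ_inter]
  exact and_congr_right fun _ => exists_congr fun y => by rw [top_inf_eq]

end Faces

section Chambers

open Module

/-- The vectors `h H` are normals of the hyperplanes `H ∈ A`. The arrangement is then encoded as a
family of normals indexed by its own hyperplanes. -/
def IsNormalFamily (A : Finset (Set (E d))) (h : Set (E d) → E d) : Prop :=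
  ∀ H ∈ A, H = ((ℝ ∙ h H)ᗮ : Submodule ℝ (E d))

variable {A : Finset (Set (E d))} {h g : Set (E d) → E d} {x : E d} {k : ℕ}

lemma exists_isNormalFamily (hA : ∀ H ∈ A, IsLinearHyperplane H) : ∃ h, IsNormalFamily A h := by
  choose! h _ hh using hA
  refine ⟨h, fun H hH => (hh H hH).trans ?_⟩
  ext z
  exact Submodule.mem_orthogonal_singleton_iff_inner_right.symm

lemma isNormalFamily_reorient (hh : IsNormalFamily A h) (P : Finset (Set (E d))) :
    IsNormalFamily A (reorient h P) := fun H hH => by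
  rw [span_reorient]
  exact hh H hH

lemma IsNormalFamily.mem_compl_iUnion_iff (hh : IsNormalFamily A h) {z : E d} :
    z ∈ (⋃ H ∈ A, H)ᶜ ↔ ∀ H ∈ A, ⟪h H, z⟫ ≠ 0 := by
  simp only [mem_compl_iff, mem_iUnion, not_exists]
  refine forall₂_congr fun H hH => not_congr ?_
  rw [← Submodule.mem_orthogonal_singleton_iff_inner_right, ← SetLike.mem_coe, ← hh H hH]

lemma IsNormalFamily.connectedComponentIn_eq_openCone (hg : IsNormalFamily A g)
    (hx : x ∈ openCone g A) : connectedComponentIn (⋃ H ∈ A, H)ᶜ x = openCone g A := by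
  have cone_subset : openCone g A ⊆ (⋃ H ∈ A, H)ᶜ := fun z hz =>
    hg.mem_compl_iUnion_iff.2 fun H hH => (hz H hH).ne'
  refine Subset.antisymm (fun z hz H hH => ?_)
    ((convex_openCone g A).isPreconnected.subset_connectedComponentIn hx cone_subset)
  by_contra! hneg
  obtain ⟨w, hw, hw0⟩ := isPreconnected_connectedComponentIn.intermediate_value hz
    (mem_connectedComponentIn (cone_subset hx)) (f := fun v => ⟪g H, v⟫) (by fun_prop)
    ⟨hneg, (hx H hH).le⟩
  exact hg.mem_compl_iUnion_iff.1 (connectedComponentIn_subset _ _ hw) H hH hw0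

lemma IsNormalFamily.closure_connectedComponentIn (hg : IsNormalFamily A g)
    (hx : x ∈ openCone g A) :
    closure (connectedComponentIn (⋃ H ∈ A, H)ᶜ x) = closedCone g A := by
  rw [hg.connectedComponentIn_eq_openCone hx]
  simpa using closure_inter_openCone (V := ⊤) isClosed_univ ⟨x, trivial, hx⟩

lemma IsNormalFamily.isChamber_iff (hh : IsNormalFamily A h) {C : Set (E d)} :
    IsChamber A C ↔ ∃ P ⊆ A, (openCone (reorient h P) A).Nonempty ∧
      closedCone (reorient h P) A = C := by
  constructor
  · rintro ⟨x, hx, rfl⟩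
    have hxP : x ∈ openCone (reorient h {H ∈ A | 0 < ⟪h H, x⟫}) A := fun H hH => by
      have hne := hh.mem_compl_iUnion_iff.1 hx H hH
      by_cases hpos : 0 < ⟪h H, x⟫
      · simp [reorient, hH, hpos]
      · simpa [reorient, hpos] using hne.lt_of_le (not_lt.1 hpos)
    exact ⟨_, Finset.filter_subset .., ⟨x, hxP⟩,
      ((isNormalFamily_reorient hh _).closure_connectedComponentIn hxP).symm⟩
  · rintro ⟨P, -, ⟨x, hx⟩, rfl⟩
    exact ⟨x, (isNormalFamily_reorient hh P).mem_compl_iUnion_iff.2 fun H hH => (hx H hH).ne',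
      ((isNormalFamily_reorient hh P).closure_connectedComponentIn hx).symm⟩

lemma reorient_injOn_closedCone {ι : Type*} (h : ι → E d) (A : Finset ι) :
    InjOn (fun P => closedCone (reorient h P) A)
      {P | P ⊆ A ∧ (openCone (reorient h P) A).Nonempty} := by
  rintro P ⟨hP, w, hw⟩ Q ⟨hQ, -⟩ (heq : closedCone _ A = closedCone _ A)
  have hwQ : w ∈ closedCone (reorient h Q) A := heq ▸ openCone_subset_closedCone _ A hw
  ext i
  by_cases hi : i ∈ A
  · have hPi := hw i hi
    have hQi := hwQ i hi
    by_cases hiP : i ∈ P <;> by_cases hiQ : i ∈ Q <;>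
      simp [reorient, hiP, hiQ] at hPi hQi ⊢ <;> linarith
  · exact iff_of_false (fun hiP => hi (hP hiP)) fun hiQ => hi (hQ hiQ)

lemma IsNormalFamily.interSet_eq_flat (hh : IsNormalFamily A h) {B : Finset (Set (E d))}
    (hB : B ⊆ A) : interSet B = flat h B := by
  simp only [interSet, flat, Submodule.coe_iInf]
  exact iInter₂_congr fun H hH => hh H (hB hH)

lemma IsNormalFamily.charCoeff_eq_whitneySum (hh : IsNormalFamily A h) (k : ℕ) :
    charCoeff A k = whitneySum h A ⊤ k := by
  rw [charCoeff, Finset.mul_sum, whitneySum]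
  refine Finset.sum_congr rfl fun B hB => ?_
  have nonempty : ((flat h B : Submodule ℝ (E d)) : Set (E d)).Nonempty := ⟨0, zero_mem _⟩
  rw [hh.interSet_eq_flat (Finset.mem_powerset.1 hB), sdim_coe_submodule, top_inf_eq, finrank_top,
    finrank_euclideanSpace_fin, mul_ite, mul_zero]
  refine ite_congr (by simp only [nonempty, true_and]) (fun hk => ?_) fun _ => rfl
  have hkd : k ≤ d := by simpa [hk] using (flat h B).finrank_le
  obtain ⟨m, rfl⟩ := Nat.exists_eq_add_of_le hkd
  rw [Nat.add_sub_cancel_left, ← pow_add,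
    show B.card + (k + m) + k = m + B.card + (k + k) by ring, pow_add _ _ (k + k),
    Even.neg_one_pow ⟨k, rfl⟩, mul_one]

theorem IsNormalFamily.card_chambers_projDimEq (hh : IsNormalFamily A h)
    {R : Finset (Set (E d))} (hR : ∀ P : Set (E d), P ∈ R ↔ IsChamber A P)
    (hx : IsGeneric h A ⊤ x) (k : ℕ) :
    (Finset.card {C ∈ R | projDimEq C x k} : ℤ) = charCoeff A k := by
  rw [hh.charCoeff_eq_whitneySum, ← cellCount_eq_whitneySum hx, cellCount,
    ← Finset.card_filter, Nat.cast_inj]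
  simp only [cellProjDimEq_top_iff]
  symm
  refine Finset.card_nbij (fun P => closedCone (reorient h P) A) (fun P hP => ?_) ?_ fun C hC => ?_
  · obtain ⟨hPA, hne, hproj⟩ := by simpa using hP
    exact Finset.mem_filter.2 ⟨(hR _).2 (hh.isChamber_iff.2 ⟨P, hPA, hne, rfl⟩), hproj⟩
  · refine (reorient_injOn_closedCone h A).mono fun P hP => ?_
    obtain ⟨hPA, hne, -⟩ := by simpa using hP
    exact ⟨hPA, hne⟩
  · obtain ⟨hC, hproj⟩ := Finset.mem_filter.1 hC
    obtain ⟨P, hPA, hne, rfl⟩ := hh.isChamber_iff.1 ((hR C).1 hC)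
    exact ⟨P, by simp [hPA, hne, hproj], rfl⟩

end Chambers

section IntrinsicVolumes

open Module MeasureTheory

variable {ι : Type*} {A : Finset ι} {μ : Measure (E d)}

lemma ae_isGeneric (hnull : ∀ W : Submodule ℝ (E d), W ≠ ⊤ → μ (W : Set (E d)) = 0) (h : ι → E d)
    (A : Finset ι) (V : Submodule ℝ (E d)) : ∀ᵐ x ∂μ, IsGeneric h A V x := by
  simp only [IsGeneric, ← Finset.mem_powerset]
  refine (Finset.eventually_all _).2 fun B _ => (Finset.eventually_all _).2 fun i _ => ?_
  set W := V ⊓ flat h B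
  by_cases hW : W ≤ (ℝ ∙ h i)ᗮ
  · exact .of_forall fun _ _ => hW
  have ne_top : (ℝ ∙ h i)ᗮ.comap W.starProjection.toLinearMap ≠ ⊤ := fun htop =>
    hW fun w hw => by
      have : w ∈ (ℝ ∙ h i)ᗮ.comap W.starProjection.toLinearMap := htop ▸ Submodule.mem_top
      simpa [Submodule.starProjection_eq_self_iff.2 hw] using this
  refine measure_mono_null (fun x hx => ?_) (hnull _ ne_top)
  exact Submodule.mem_orthogonal_singleton_iff_inner_right.2 (Classical.not_imp.1 hx).1

lemma isClosed_isNearestPt {P : Set (E d)} (hP : IsClosed P) {f : E d → E d}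
    (hf : Continuous f) : IsClosed {x | IsNearestPt P x (f x)} := by
  simp only [IsNearestPt, ofPred_and, ofPred_forall]
  exact (hP.preimage hf).inter <| isClosed_biInter fun z _ =>
    isClosed_le (by fun_prop) (by fun_prop)

lemma projDimEq_closedCone_iff_starProjection {g : ι → E d} {x : E d} {k : ℕ} :
    projDimEq (closedCone g A) x k ↔ ∃ B ∈ A.powerset, finrank ℝ (flat g B) = k ∧
      IsNearestPt (closedCone g A) x ((flat g B).starProjection x) ∧
        ∀ i ∈ A \ B, ⟪g i, (flat g B).starProjection x⟫ ≠ 0 := by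
  rw [projDimEq_closedCone_iff]
  constructor
  · rintro ⟨y, hy, hk⟩
    have proj_eq : (minFlat g A y).starProjection x = y := by
      simpa only [top_inf_eq] using
        IsNearestPt.starProjection_eq (V := ⊤) (by simpa using hy)
    refine ⟨zeroSet g A y, Finset.mem_powerset.2 (zeroSet_subset g A y), hk, ?_⟩
    rw [← minFlat, proj_eq]
    exact ⟨hy, fun i hi h0 => (Finset.mem_sdiff.1 hi).2
      (mem_zeroSet.2 ⟨(Finset.mem_sdiff.1 hi).1, h0⟩)⟩
  · rintro ⟨B, hB, hk, hy, hne⟩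
    refine ⟨_, hy, ?_⟩
    have zeroSet_eq : zeroSet g A ((flat g B).starProjection x) = B := by
      ext i
      refine mem_zeroSet.trans ⟨fun ⟨hiA, h0⟩ => ?_, fun hiB => ⟨Finset.mem_powerset.1 hB hiB,
        mem_flat.1 (Submodule.starProjection_apply_mem _ x) i hiB⟩⟩
      by_contra hiB
      exact hne i (Finset.mem_sdiff.2 ⟨hiA, hiB⟩) h0
    rw [minFlat, zeroSet_eq, hk]

lemma measurableSet_projDimEq_closedCone (g : ι → E d) (A : Finset ι) (k : ℕ) :
    MeasurableSet {x | projDimEq (closedCone g A) x k} := by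
  simp only [projDimEq_closedCone_iff_starProjection, ofPred_exists, ofPred_and, ofPred_forall,
    ← exists_prop (a := _ ∈ _)]
  refine Finset.measurableSet_biUnion _ fun B _ => (MeasurableSet.const _).inter <|
    (isClosed_isNearestPt (isClosed_closedCone g A) (by fun_prop)).measurableSet.inter <|
      Finset.measurableSet_biInter _ fun i _ => ?_
  exact (isOpen_ne_fun (by fun_prop) continuous_const).measurableSet

lemma IsChamber.measurableSet_projDimEq {A : Finset (Set (E d))}
    (hA : ∀ H ∈ A, IsLinearHyperplane H) {C : Set (E d)} (hC : IsChamber A C) (k : ℕ) :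
    MeasurableSet {x | projDimEq C x k} := by
  obtain ⟨h, hh⟩ := exists_isNormalFamily hA
  obtain ⟨P, -, -, rfl⟩ := hh.isChamber_iff.1 hC
  exact measurableSet_projDimEq_closedCone _ A k

lemma sum_measureReal_eq_of_ae_card_eq {Ω α : Type*} [MeasurableSpace Ω] {ν : Measure Ω}
    [IsFiniteMeasure ν] {s : Finset α} {S : α → Set Ω} (hS : ∀ a ∈ s, MeasurableSet (S a)) {c : ℝ}
    (hc : ∀ᵐ ω ∂ν, (Finset.card {a ∈ s | ω ∈ S a} : ℝ) = c) :
    ∑ a ∈ s, ν.real (S a) = c * ν.real univ := by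
  calc ∑ a ∈ s, ν.real (S a)
      = ∑ a ∈ s, ∫ ω, (S a).indicator 1 ω ∂ν :=
        Finset.sum_congr rfl fun a ha => (integral_indicator_one (hS a ha)).symm
    _ = ∫ ω, ∑ a ∈ s, (S a).indicator 1 ω ∂ν :=
        (integral_finsetSum s fun a ha => (integrable_const 1).indicator (hS a ha)).symm
    _ = ∫ _, c ∂ν := integral_congr_ae <| hc.mono fun ω hω => by
        simp only [← hω, indicator_apply, Pi.one_apply, Finset.sum_boole]
    _ = c * ν.real univ := by rw [integral_const, smul_eq_mul, mul_comm]

end IntrinsicVolumes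

theorem stmt11_general {d : ℕ} (A : Finset (Set (E d)))
    (hA : ∀ H ∈ A, IsLinearHyperplane H)
    (μ : MeasureTheory.Measure (E d)) [MeasureTheory.IsFiniteMeasure μ]
    (hnull : ∀ V : Submodule ℝ (E d), V ≠ ⊤ → μ (V : Set (E d)) = 0) (k : ℕ)
    (R : Finset (Set (E d))) (hR : ∀ P : Set (E d), P ∈ R ↔ IsChamber A P) :
    ∑ C ∈ R, μ.real {x | projDimEq C x k} = charCoeff A k * μ.real univ := by
  obtain ⟨h, hh⟩ := exists_isNormalFamily hA
  refine sum_measureReal_eq_of_ae_card_eq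
    (fun C hC => ((hR C).1 hC).measurableSet_projDimEq hA k) ?_
  filter_upwards [ae_isGeneric hnull h A ⊤] with x hx
  exact_mod_cast hh.card_chambers_projDimEq hR hx k

/-- Klivans–Swartz: for a rotationally invariant probability
measure giving zero mass to proper subspaces, `Σ_C ν_k(C) = a_k`. -/
theorem stmt11 {d : ℕ} (A : Finset (Set (E d)))
    (hA : ∀ H ∈ A, IsLinearHyperplane H)
    (μ : MeasureTheory.Measure (E d)) [MeasureTheory.IsProbabilityMeasure μ]
    (hrot : ∀ g : (E d) ≃ₗᵢ[ℝ] (E d), MeasureTheory.Measure.map (⇑g) μ = μ)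
    (hnull : ∀ V : Submodule ℝ (E d), V ≠ ⊤ → μ (V : Set (E d)) = 0)
    (k : ℕ) (hk : k ≤ d)
    (R : Finset (Set (E d))) (hR : ∀ P : Set (E d), P ∈ R ↔ IsChamber A P) :
    ∑ C ∈ R, (μ {x : E d | projDimEq C x k}).toReal = (charCoeff A k : ℝ) := by
  simpa [MeasureTheory.Measure.real] using stmt11_general A hA μ hnull k R hR
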